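/- For every g ≥ 1, the map sending an elementary sequence φ of length g to the function δ_φ : {1,…,2g} → {0,1} defined by δ_φ(i) = 1 − ψ(i) + ψ(i−1), where ψ is the final sequence stretched from φ, is well defined (its values lie in {0,1}) and is a bijection from the set of elementary sequences of length g onto the set of symmetric functions δ : {1,…,2g} → {0,1}, i.e. those satisfying δ(i) + δ(2g+1−i) = 1 for all 1 ≤ i ≤ g. -/

import Mathlib

/-- `φ` is an elementary sequence of length `g`, encoded as a function `ℕ → ℕ` normalised
so that `φ i = φ g` for `i ≥ g` (a canonical extension of a function on `{0,…,g}`):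
`φ 0 = 0` and `φ i ≤ φ (i+1) ≤ φ i + 1` for `0 ≤ i < g`. -/
def IsElemSeq (g : ℕ) (φ : ℕ → ℕ) : Prop :=
  φ 0 = 0 ∧ (∀ i < g, φ i ≤ φ (i + 1) ∧ φ (i + 1) ≤ φ i + 1) ∧ ∀ i, g ≤ i → φ i = φ g

/-- The final sequence `ψ : {0,…,2g} → ℕ` stretched from an elementary sequence `φ` of
length `g`: `ψ i = φ i` for `0 ≤ i ≤ g` and `ψ (2g - i) = g - i + φ i` for `0 ≤ i ≤ g`. -/
def stretched (g : ℕ) (φ : ℕ → ℕ) : ℕ → ℕ := fun i =>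
  if i ≤ g then φ i else (i - g) + φ (2 * g - i)

/-- The function `δ_φ : {1,…,2g} → {0,1}`, `δ_φ i = 1 - ψ i + ψ (i-1)` (where `ψ` is the
final sequence stretched from `φ`), encoded as a function `ℕ → ℕ` normalised to vanish
outside `{1,…,2g}`. -/
def deltaOf (g : ℕ) (φ : ℕ → ℕ) : ℕ → ℕ := fun i =>
  if 1 ≤ i ∧ i ≤ 2 * g then 1 + stretched g φ (i - 1) - stretched g φ i else 0

/-- `δ : {1,…,2g} → {0,1}` is symmetric: `δ i + δ (2g+1-i) = 1` for `1 ≤ i ≤ g`; encoded as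
a function `ℕ → ℕ` with values `≤ 1` on `{1,…,2g}` normalised to vanish elsewhere. -/
def IsSymDelta (g : ℕ) (δ : ℕ → ℕ) : Prop :=
  (∀ i, 1 ≤ i → i ≤ 2 * g → δ i ≤ 1) ∧
  (∀ i, 1 ≤ i → i ≤ g → δ i + δ (2 * g + 1 - i) = 1) ∧
  ∀ i, ¬(1 ≤ i ∧ i ≤ 2 * g) → δ i = 0

/-!
On the lower half `{1,…,g}` the function `δ_φ` records the steps of `φ`: `δ_φ (i + 1) = 0` where
`φ` increases from `i` to `i + 1`, and `δ_φ (i + 1) = 1` where it stays constant. The stretching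
makes `δ_φ (2g - i)` the complementary value. A symmetric `δ` is determined by its lower half, and
an elementary sequence is recovered from its steps by summing them, so `δ ↦ ∑ (1 - δ)` inverts
`φ ↦ δ_φ`.
-/

/-- The elementary sequence `i ↦ ∑_{1 ≤ k ≤ i} (1 - δ k)` of length `g` with steps prescribed by
`δ`, the inverse of `φ ↦ δ_φ`. It is constant beyond `g`, and the subtraction is truncated, so any
nonzero value of `δ` gives a zero step. -/
def elemSeqOf (g : ℕ) (δ : ℕ → ℕ) : ℕ → ℕ := fun i =>
  ∑ k ∈ Finset.range (min i g), (1 - δ (k + 1))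

section

variable {g i : ℕ} {φ δ δ' : ℕ → ℕ}

theorem stretched_of_le (hi : i ≤ g) : stretched g φ i = φ i :=
  if_pos hi

theorem stretched_two_mul_sub (hi : i ≤ g) : stretched g φ (2 * g - i) = g - i + φ i := by
  rcases hi.eq_or_lt with rfl | hlt
  · rw [show 2 * i - i = i by omega, stretched_of_le le_rfl, Nat.sub_self, zero_add]
  · rw [stretched, if_neg (by omega), show 2 * g - i - g = g - i by omega,
      show 2 * g - (2 * g - i) = i by omega]

theorem deltaOf_succ (hi : i < g) : deltaOf g φ (i + 1) = 1 + φ i - φ (i + 1) := by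
  rw [deltaOf, if_pos (by omega), Nat.add_sub_cancel, stretched_of_le hi.le, stretched_of_le hi]

theorem deltaOf_two_mul_sub (hi : i < g) : deltaOf g φ (2 * g - i) = φ (i + 1) - φ i := by
  rw [deltaOf, if_pos (by omega), Nat.sub_sub, stretched_two_mul_sub (Nat.succ_le_of_lt hi),
    stretched_two_mul_sub hi.le, Nat.succ_eq_add_one]
  omega

theorem IsElemSeq.monotone (hφ : IsElemSeq g φ) : Monotone φ := by
  obtain ⟨-, step, const⟩ := hφ
  refine monotone_nat_of_le_succ fun i => ?_
  rcases lt_or_ge i g with hi | hi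
  · exact (step i hi).1
  · rw [const i hi, const (i + 1) (by omega)]

theorem isSymDelta_of_add_eq_one (symm : ∀ i < g, δ (i + 1) + δ (2 * g - i) = 1)
    (vanish : ∀ i, ¬(1 ≤ i ∧ i ≤ 2 * g) → δ i = 0) : IsSymDelta g δ := by
  refine ⟨fun i hi hi' => ?_, fun i hi hi' => ?_, vanish⟩
  · rcases le_or_gt i g with hig | hig
    · obtain ⟨k, rfl⟩ := Nat.exists_eq_add_of_le' hi
      exact (Nat.le_add_right _ _).trans (symm k hig).le
    · have mirror := symm (2 * g - i) (by omega)
      rw [Nat.sub_sub_self hi'] at mirror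
      exact (Nat.le_add_left _ _).trans mirror.le
  · obtain ⟨k, rfl⟩ := Nat.exists_eq_add_of_le' hi
    rw [Nat.add_sub_add_right]
    exact symm k hi'

theorem IsSymDelta.add_eq_one (hδ : IsSymDelta g δ) (hi : i < g) :
    δ (i + 1) + δ (2 * g - i) = 1 := by
  simpa only [Nat.add_sub_add_right] using hδ.2.1 (i + 1) (by omega) hi

theorem IsSymDelta.eq_of_forall_lt (hδ : IsSymDelta g δ) (hδ' : IsSymDelta g δ')
    (h : ∀ i < g, δ (i + 1) = δ' (i + 1)) : δ = δ' := by
  funext i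
  by_cases hi : 1 ≤ i ∧ i ≤ 2 * g
  · rcases le_or_gt i g with hig | hig
    · obtain ⟨k, rfl⟩ := Nat.exists_eq_add_of_le' hi.1
      exact h k hig
    · have hk : 2 * g - i < g := by omega
      have mirror := (hδ.add_eq_one hk).trans (hδ'.add_eq_one hk).symm
      rw [h _ hk, Nat.sub_sub_self hi.2] at mirror
      exact Nat.add_left_cancel mirror
  · rw [hδ.2.2 i hi, hδ'.2.2 i hi]

theorem IsElemSeq.isSymDelta_deltaOf (hφ : IsElemSeq g φ) : IsSymDelta g (deltaOf g φ) := by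
  refine isSymDelta_of_add_eq_one (fun i hi => ?_) fun i hi => if_neg hi
  rw [deltaOf_succ hi, deltaOf_two_mul_sub hi]
  have step := hφ.2.1 i hi
  omega

theorem elemSeqOf_succ (hi : i < g) :
    elemSeqOf g δ (i + 1) = elemSeqOf g δ i + (1 - δ (i + 1)) := by
  simp only [elemSeqOf, min_eq_left hi.le, min_eq_left (Nat.succ_le_of_lt hi),
    Finset.sum_range_succ]

theorem isElemSeq_elemSeqOf (g : ℕ) (δ : ℕ → ℕ) : IsElemSeq g (elemSeqOf g δ) := by
  refine ⟨by simp [elemSeqOf], fun i hi => ?_, fun i hi => ?_⟩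
  · rw [elemSeqOf_succ hi]
    omega
  · simp only [elemSeqOf, min_eq_right hi, min_self]

theorem IsElemSeq.elemSeqOf_deltaOf (hφ : IsElemSeq g φ) : elemSeqOf g (deltaOf g φ) = φ := by
  funext i
  calc elemSeqOf g (deltaOf g φ) i
      = ∑ k ∈ Finset.range (min i g), (φ (k + 1) - φ k) := by
        refine Finset.sum_congr rfl fun k hk => ?_
        have hkg : k < g := (Finset.mem_range.1 hk).trans_le (min_le_right i g)
        rw [deltaOf_succ hkg]
        have step := hφ.2.1 k hkg
        omega
    _ = φ (min i g) := by rw [Finset.sum_range_tsub hφ.monotone, hφ.1, Nat.sub_zero]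
    _ = φ i := by
        rcases le_total i g with hi | hi
        · rw [min_eq_left hi]
        · rw [min_eq_right hi, hφ.2.2 i hi]

theorem IsSymDelta.deltaOf_elemSeqOf (hδ : IsSymDelta g δ) : deltaOf g (elemSeqOf g δ) = δ := by
  refine (isElemSeq_elemSeqOf g δ).isSymDelta_deltaOf.eq_of_forall_lt hδ fun i hi => ?_
  rw [deltaOf_succ hi, elemSeqOf_succ hi]
  have le_one := hδ.1 (i + 1) (by omega) (by omega)
  omega

end

/-- For every `g ≥ 1`, the map `φ ↦ δ_φ` is well defined (its values lie in `{0,1}`, and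
`δ_φ` is symmetric) and is a bijection from the set of elementary sequences of length `g`
onto the set of symmetric functions `δ : {1,…,2g} → {0,1}`. -/
theorem stmt7 :
    ∀ g : ℕ, 1 ≤ g →
      Set.BijOn (deltaOf g) {φ : ℕ → ℕ | IsElemSeq g φ} {δ : ℕ → ℕ | IsSymDelta g δ} := by
  intro g _
  have inverse : Set.InvOn (elemSeqOf g) (deltaOf g)
      {φ : ℕ → ℕ | IsElemSeq g φ} {δ : ℕ → ℕ | IsSymDelta g δ} :=
    ⟨fun _ hφ => hφ.elemSeqOf_deltaOf, fun _ hδ => hδ.deltaOf_elemSeqOf⟩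
  exact inverse.bijOn (fun _ hφ => hφ.isSymDelta_deltaOf) fun δ _ => isElemSeq_elemSeqOf g δ
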